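/- For every real number a ≠ 0 there exists exactly one function r : ℝ → ℝ such that r(s) = 0 for all s < 0, r is continuous on [0,∞), and r(s) = 1 + a ∫_0^s r(u−1)·χ_{[1,∞)}(u) du for all s ≥ 0. -/

import Mathlib

/-!
The equation is solved by the method of steps. Because of the cut-off at `1`, the integral in the
equation equals `∫ r (u - 1)` over `(1, s]` and so sees `r` only on `[0, s - 1]`: the values of `r`
before time `n` determine its values before time `n + 1`. Uniqueness follows by induction on `n`
(`IsFundamentalSolution.eq_of_lt`). For existence, the Picard iterates `iterate a n` started at the
constant `1` are continuous and stabilise: all iterates of index at least `n` agree on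
`(-∞, n + 1]` (`iterate_eq_of_le`). Gluing them gives a function that coincides with the `n`-th
iterate on `[0, n + 1]`, hence is continuous on `[0, ∞)` and solves the equation.
-/

open MeasureTheory Set

/-- The defining property of the fundamental solution `r` of the delay equation
`dx_s = a x_{s-1} ds`: `r(s) = 0` for `s < 0`, `r` is continuous on `[0,∞)`, and
`r(s) = 1 + a ∫_0^s r(u-1)·χ_{[1,∞)}(u) du` for `s ≥ 0`. -/
def IsFundamentalSolution (a : ℝ) (r : ℝ → ℝ) : Prop :=
  (∀ s : ℝ, s < 0 → r s = 0) ∧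
  ContinuousOn r (Set.Ici (0 : ℝ)) ∧
  ∀ s : ℝ, 0 ≤ s →
    r s = 1 + a * ∫ u in (0 : ℝ)..s, r (u - 1) * Set.indicator (Set.Ici (1 : ℝ)) 1 u

/-- The indicator merely truncates the domain of integration. No integrability of `f` is needed,
since both sides are integrals of the same function up to a null set. -/
theorem integral_cutoff (f : ℝ → ℝ) {s : ℝ} (hs : 0 ≤ s) :
    ∫ u in (0 : ℝ)..s, f (u - 1) * Set.indicator (Set.Ici (1 : ℝ)) 1 u =
      ∫ u in (1 : ℝ)..(max s 1), f (u - 1) := by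
  have h1 : (fun u => f (u - 1) * Set.indicator (Set.Ici (1 : ℝ)) 1 u) =
      Set.indicator (Set.Ici (1 : ℝ)) (fun u => f (u - 1)) := by
    funext u
    by_cases hu : u ∈ Set.Ici (1 : ℝ) <;> simp [hu]
  have h2 : Set.Ioc 0 s ∩ Set.Ici 1 = Set.Icc 1 s := by
    ext u
    simp only [Set.mem_inter_iff, Set.mem_Ioc, Set.mem_Ici, Set.mem_Icc]
    constructor
    · rintro ⟨⟨_, h⟩, h'⟩
      exact ⟨h', h⟩
    · rintro ⟨h, h'⟩
      exact ⟨⟨by linarith, h'⟩, h⟩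
  have h3 : Set.Ioc 1 (max s 1) = Set.Ioc 1 s := by
    ext u
    simp only [Set.mem_Ioc, le_max_iff]
    constructor
    · rintro ⟨h, h' | h'⟩
      · exact ⟨h, h'⟩
      · linarith
    · rintro ⟨h, h'⟩
      exact ⟨h, Or.inl h'⟩
  rw [intervalIntegral.integral_of_le hs, h1, setIntegral_indicator measurableSet_Ici, h2,
    intervalIntegral.integral_of_le (le_max_right _ _), h3, integral_Icc_eq_integral_Ioc]

/-- Two solutions agree before every time `n`. -/
theorem IsFundamentalSolution.eq_of_lt {a : ℝ} {r q : ℝ → ℝ} (hr : IsFundamentalSolution a r)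
    (hq : IsFundamentalSolution a q) (n : ℕ) : ∀ s : ℝ, s < n → r s = q s := by
  induction n with
  | zero =>
    intro s hs
    have hs' : s < 0 := by simpa using hs
    rw [hr.1 s hs', hq.1 s hs']
  | succ n ih =>
    intro s hs
    rcases lt_or_ge s 0 with h0 | h0
    · rw [hr.1 s h0, hq.1 s h0]
    · push_cast at hs
      rw [hr.2.2 s h0, hq.2.2 s h0]
      congr 2
      refine intervalIntegral.integral_congr fun u hu => ?_
      rw [Set.uIcc_of_le h0] at hu
      rw [ih (u - 1) (by linarith [hu.2])]

/-- The Picard iterates of the delay equation, started at the constant `1`. The upper limit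
`max s 1` makes them continuous functions on the whole line, equal to `1` on `(-∞, 1]`. -/
noncomputable def iterate (a : ℝ) : ℕ → ℝ → ℝ
  | 0 => fun _ => 1
  | n + 1 => fun s => 1 + a * ∫ u in (1 : ℝ)..(max s 1), iterate a n (u - 1)

theorem continuous_iterate (a : ℝ) (n : ℕ) : Continuous (iterate a n) := by
  induction n with
  | zero => exact continuous_const
  | succ n ih =>
    have hc : Continuous fun u : ℝ => iterate a n (u - 1) := by fun_prop
    have hp : Continuous fun t : ℝ => ∫ u in (1 : ℝ)..t, iterate a n (u - 1) :=
      intervalIntegral.continuous_primitive (fun x y => hc.intervalIntegrable x y) 1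
    have hm : Continuous fun s : ℝ => max s 1 := by fun_prop
    exact continuous_const.add (continuous_const.mul (hp.comp hm))

theorem iterate_succ_eq (a : ℝ) (n : ℕ) :
    ∀ s : ℝ, s ≤ n + 1 → iterate a (n + 1) s = iterate a n s := by
  induction n with
  | zero =>
    intro s hs
    have hs' : s ≤ 1 := by simpa using hs
    simp [iterate, max_eq_right hs']
  | succ n ih =>
    intro s hs
    push_cast at hs
    change 1 + a * ∫ u in (1 : ℝ)..(max s 1), iterate a (n + 1) (u - 1) =
      1 + a * ∫ u in (1 : ℝ)..(max s 1), iterate a n (u - 1)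
    congr 2
    refine intervalIntegral.integral_congr fun u hu => ?_
    rw [Set.uIcc_of_le (le_max_right _ _)] at hu
    have hn : (0 : ℝ) ≤ n := n.cast_nonneg
    have hu2 : u ≤ n + 1 + 1 := hu.2.trans (max_le hs (by linarith))
    exact ih (u - 1) (by linarith)

theorem iterate_eq_of_le (a : ℝ) {n m : ℕ} (hnm : n ≤ m) {s : ℝ} (hs : s ≤ n + 1) :
    iterate a m s = iterate a n s := by
  induction m, hnm using Nat.le_induction with
  | base => rfl
  | succ m hm ih =>
    have hc : (n : ℝ) ≤ m := by exact_mod_cast hm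
    rw [iterate_succ_eq a m s (by linarith), ih]

/-- The glued solution: on `[n, n + 1)` it is the `n`-th Picard iterate. -/
noncomputable def glued (a : ℝ) (s : ℝ) : ℝ :=
  if s < 0 then 0 else iterate a ⌊s⌋₊ s

theorem glued_eq (a : ℝ) (n : ℕ) {s : ℝ} (h0 : 0 ≤ s) (hs : s ≤ n + 1) :
    glued a s = iterate a n s := by
  rw [glued, if_neg h0.not_gt]
  rcases le_total n ⌊s⌋₊ with h | h
  · exact iterate_eq_of_le a h hs
  · exact (iterate_eq_of_le a h (Nat.lt_floor_add_one s).le).symm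

theorem isFundamentalSolution_glued (a : ℝ) : IsFundamentalSolution a (glued a) := by
  refine ⟨fun s hs => if_pos hs, ?_, ?_⟩
  · intro x hx
    obtain ⟨n, hn⟩ := exists_nat_gt x
    refine (continuous_iterate a n).continuousWithinAt.congr_of_eventuallyEq ?_
      (glued_eq a n hx (by linarith))
    filter_upwards [self_mem_nhdsWithin, mem_nhdsWithin_of_mem_nhds (Iio_mem_nhds hn)] with y hy hyn
    exact glued_eq a n hy (by linarith [Set.mem_Iio.mp hyn])
  · intro s hs
    obtain ⟨n, hn⟩ := exists_nat_gt s
    rw [integral_cutoff _ hs, glued_eq a (n + 1) hs (by push_cast; linarith)]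
    change 1 + a * ∫ u in (1 : ℝ)..(max s 1), iterate a n (u - 1) = _
    congr 2
    refine intervalIntegral.integral_congr fun u hu => ?_
    rw [Set.uIcc_of_le (le_max_right _ _)] at hu
    have hn0 : (0 : ℝ) ≤ n := n.cast_nonneg
    have hu2 : u ≤ n + 1 := hu.2.trans (max_le (by linarith) (by linarith))
    exact (glued_eq a n (by linarith [hu.1]) (by linarith)).symm

theorem stmt_0 (a : ℝ) (ha : a ≠ 0) :
    ∃! r : ℝ → ℝ, IsFundamentalSolution a r := by
  refine ⟨glued a, isFundamentalSolution_glued a, fun q hq => ?_⟩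
  funext s
  obtain ⟨n, hn⟩ := exists_nat_gt s
  exact hq.eq_of_lt (isFundamentalSolution_glued a) n s hn
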